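/- For every positive integer m, ∑_{d : α(d) | m} φ(d) = a_m; that is, the m-th Fibonacci number equals the sum of φ(d) over all d whose rank of apparition divides m. -/

import Mathlib

open Finset

noncomputable def fibAlpha (n : ℕ) : ℕ := sInf {m | 0 < m ∧ n ∣ Nat.fib m}

/-- The rank of apparition of `d` in the sequence `f`: the least positive index `m` with `d ∣ f m`.
It generalizes `fibAlpha` from `Nat.fib` to an arbitrary sequence, and has the junk value `0` if `d`
divides no term of positive index. -/
noncomputable def rankOfApparition (f : ℕ → ℕ) (d : ℕ) : ℕ := sInf {m | 0 < m ∧ d ∣ f m}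

section RankOfApparition

variable {f : ℕ → ℕ} {d m : ℕ}

theorem rankOfApparition_le (hm : 0 < m) (hd : d ∣ f m) : rankOfApparition f d ≤ m :=
  Nat.sInf_le ⟨hm, hd⟩

theorem rankOfApparition_pos (hm : 0 < m) (hd : d ∣ f m) : 0 < rankOfApparition f d :=
  (Nat.sInf_mem (s := {k | 0 < k ∧ d ∣ f k}) ⟨m, hm, hd⟩).1

theorem dvd_apply_rankOfApparition (h : 0 < rankOfApparition f d) :
    d ∣ f (rankOfApparition f d) :=
  (Nat.sInf_mem (Nat.nonempty_of_pos_sInf h)).2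

theorem rankOfApparition_dvd_iff (hf : Nat.IsStrongDvdSequence f) (hm : 0 < m) :
    rankOfApparition f d ∣ m ↔ d ∣ f m := by
  constructor
  · intro hdvd
    have hpos : 0 < rankOfApparition f d := Nat.pos_of_dvd_of_pos hdvd hm
    exact (dvd_apply_rankOfApparition hpos).trans (hf.isDvdSequence _ _ hdvd)
  · intro hd
    have hpos : 0 < rankOfApparition f d := rankOfApparition_pos hm hd
    have hd_gcd : d ∣ f ((rankOfApparition f d).gcd m) :=
      hf _ m ▸ Nat.dvd_gcd (dvd_apply_rankOfApparition hpos) hd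
    have hle : rankOfApparition f d ≤ (rankOfApparition f d).gcd m :=
      rankOfApparition_le (Nat.gcd_pos_of_pos_right _ hm) hd_gcd
    exact Nat.gcd_eq_left_iff_dvd.mp ((Nat.gcd_le_left m hpos).antisymm hle)

theorem filter_rankOfApparition_dvd_eq_divisors (hf : Nat.IsStrongDvdSequence f) (hm : 0 < m)
    (hfm : 0 < f m) {N : ℕ} (hN : f m ≤ N) :
    (Icc 1 N).filter (fun d => rankOfApparition f d ∣ m) = (f m).divisors := by
  ext d
  simp only [mem_filter, mem_Icc, Nat.mem_divisors, rankOfApparition_dvd_iff hf hm]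
  constructor
  · rintro ⟨-, hd⟩
    exact ⟨hd, hfm.ne'⟩
  · rintro ⟨hd, -⟩
    exact ⟨⟨Nat.pos_of_dvd_of_pos hd hfm, (Nat.le_of_dvd hfm hd).trans hN⟩, hd⟩

/-- As `N ≥ f m` is arbitrary, this is the sum over all `d` with `rankOfApparition f d ∣ m`. -/
theorem fib_eq_sum_totient_alpha_general (hf : Nat.IsStrongDvdSequence f) (hm : 0 < m)
    (hfm : 0 < f m) {N : ℕ} (hN : f m ≤ N) :
    ∑ d ∈ (Icc 1 N).filter (fun d => rankOfApparition f d ∣ m), Nat.totient d = f m := by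
  rw [filter_rankOfApparition_dvd_eq_divisors hf hm hfm hN, Nat.sum_totient]

end RankOfApparition

/-- `a_m = ∑_{d : α(d) ∣ m} φ(d)`; every such `d` divides `a_m`, hence lies in
`Icc 1 (fib m)`. -/
theorem fib_eq_sum_totient_alpha (m : ℕ) (hm : 0 < m) :
    ∑ d ∈ (Icc 1 (Nat.fib m)).filter (fun d => fibAlpha d ∣ m), Nat.totient d
      = Nat.fib m :=
  fib_eq_sum_totient_alpha_general Nat.isStrongDvdSequence_fib hm (Nat.fib_pos.mpr hm) le_rfl
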